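/- As m → ∞, the sum Σ_{k=1}^m 16^k C(m+k−1, m−k)² is asymptotically equivalent to (√2+1)^{4m} / (2^{1/4} √(2πm)); that is, lim_{m→∞} [Σ_{k=1}^m 16^k C(m+k−1, m−k)²] · 2^{1/4} √(2πm) · (√2+1)^{−4m} = 1. -/

import Mathlib

open Filter

noncomputable def Vv (p p' : ℂ) : ℕ → ℂ
  | 0 => 0
  | m+1 => p * Vv p p' m + p' ^ m

lemma Vv_rec (p p' : ℂ) (m : ℕ) : Vv p p' (m+2) = (p + p') * Vv p p' (m+1) - p * p' * Vv p p' m := by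
  simp only [Vv]; ring

lemma Vv_mul (p p' : ℂ) (m : ℕ) : (p - p') * Vv p p' m = p ^ m - p' ^ m := by
  induction m with
  | zero => simp [Vv]
  | succ m ih => simp only [Vv]; linear_combination p * ih

lemma Vv_le (p p' : ℂ) (hp : 1 ≤ ‖p‖) (hp' : ‖p'‖ ≤ 1) (m : ℕ) : ‖Vv p p' m‖ ≤ m * ‖p‖ ^ m := by
  induction m with
  | zero => simp [Vv]
  | succ m ih =>
    simp only [Vv]
    refine (norm_add_le _ _).trans ?_
    rw [norm_mul, norm_pow]
    have h1 : ‖p'‖ ^ m ≤ 1 := pow_le_one₀ (norm_nonneg _) hp'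
    have h2 : 1 ≤ ‖p‖ ^ (m+1) := one_le_pow₀ hp
    have h3 := mul_le_mul_of_nonneg_left ih (norm_nonneg p)
    push_cast
    rw [pow_succ] at *
    nlinarith

noncomputable def Fs (m N : ℕ) (y : ℂ) : ℂ := ∑ j ∈ Finset.range N, ((m+j).choose (2*j+1) : ℂ) * y^(j+1)
noncomputable def Gs (m N : ℕ) (y : ℂ) : ℂ := ∑ j ∈ Finset.range N, ((m+j).choose (2*j) : ℂ) * y^j

lemma Gs_succ (m N : ℕ) (y : ℂ) : Gs (m+1) (N+1) y = Gs m (N+1) y + Fs (m+1) N y := by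
  unfold Gs Fs
  rw [Finset.sum_range_succ', Finset.sum_range_succ' _ N, add_right_comm (Finset.sum _ _), ← Finset.sum_add_distrib]
  congr 1
  · apply Finset.sum_congr rfl
    intro j _
    have : (m+1+(j+1)).choose (2*(j+1)) = (m+(j+1)).choose (2*(j+1)) + (m+1+j).choose (2*j+1) := by
      rw [show m+1+(j+1) = (m+1+j)+1 by ring, show 2*(j+1) = (2*j+1)+1 by ring, Nat.choose_succ_succ,
        show m+(j+1) = m+1+j by ring, add_comm]
    rw [this]; push_cast; ring
  · simp

lemma Fs_succ (m N : ℕ) (y : ℂ) : Fs (m+1) N y = Fs m N y + y * Gs m N y := by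
  unfold Gs Fs
  rw [Finset.mul_sum, ← Finset.sum_add_distrib]
  apply Finset.sum_congr rfl
  intro j _
  have : (m+1+j).choose (2*j+1) = (m+j).choose (2*j) + (m+j).choose (2*j+1) := by
    rw [show m+1+j = (m+j)+1 by ring, Nat.choose_succ_succ]
  rw [this]; push_cast; ring

lemma Fs_stab (m N : ℕ) (h : m ≤ N) (y : ℂ) : Fs m (N+1) y = Fs m N y := by
  unfold Fs
  rw [Finset.sum_range_succ, Nat.choose_eq_zero_of_lt (by omega)]; simp

lemma FG (p p' y : ℂ) (h : p * p' = 1) (hy : p + p' = 2 + y) (N : ℕ) (m : ℕ) (hm : m ≤ N) :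
    Fs m (N+1) y = y * Vv p p' m ∧ Gs m (N+1) y = Vv p p' (m+1) - Vv p p' m := by
  induction m with
  | zero =>
    constructor
    · simp only [Fs, Vv, mul_zero]
      apply Finset.sum_eq_zero
      intro j _
      rw [Nat.choose_eq_zero_of_lt (by omega)]; simp
    · simp only [Gs, Vv, mul_zero]
      rw [Finset.sum_range_succ', Finset.sum_eq_zero]
      · simp
      intro j _
      rw [Nat.choose_eq_zero_of_lt (by omega)]; simp
  | succ m ih =>
    obtain ⟨h1, h2⟩ := ih (by omega)
    have h3 : Fs (m+1) (N+1) y = y * Vv p p' (m+1) := by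
      rw [Fs_succ, h1, h2]; ring
    refine ⟨h3, ?_⟩
    rw [Gs_succ, ← Fs_stab _ _ hm, h3, h2, Vv_rec, h, hy]; ring

lemma Fs_eq (p p' y : ℂ) (h : p * p' = 1) (hy : p + p' = 2 + y) (m : ℕ) :
    Fs m m y = y * Vv p p' m := by
  rw [← Fs_stab _ _ le_rfl]; exact (FG p p' y h hy m m le_rfl).1

lemma exists_p (φ : ℝ) (hφ : 0 ≤ Real.cos φ) : ∃ p p' : ℂ, p * p' = 1 ∧
    p + p' = 2 + 4 * Complex.exp (φ * Complex.I) ^ 2 ∧ 1 ≤ ‖p‖ ∧ ‖p'‖ = ‖p‖⁻¹ ∧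
    ‖p‖ + ‖p‖⁻¹ = 2 + 4 * Real.cos φ ∧ ‖p - p'‖ ^ 2 = 32 * Real.cos φ := by
  have key : ∃ p p' : ℂ, p * p' = 1 ∧
    p + p' = 2 + 4 * Complex.exp (φ * Complex.I) ^ 2 ∧ 
    ‖p‖ + ‖p'‖ = 2 + 4 * Real.cos φ ∧ ‖p - p'‖ ^ 2 = 32 * Real.cos φ := by
    set u := Complex.exp (φ * Complex.I) with hu
    have hu1 : ‖u‖ = 1 := Complex.norm_exp_ofReal_mul_I φ
    obtain ⟨s, hs⟩ := IsAlgClosed.exists_pow_nat_eq (u^2+1) (n := 2) (by norm_num)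
    have hs2 : ‖s‖^2 = 2 * Real.cos φ := by
      rw [← norm_pow, hs]
      have : u^2+1 = (2 * Real.cos φ : ℝ) * u := by
        push_cast
        rw [Complex.two_cos, ← hu, neg_mul, Complex.exp_neg, ← hu]
        have : u ≠ 0 := Complex.exp_ne_zero _
        field_simp
      rw [this, norm_mul, hu1, Complex.norm_real, Real.norm_of_nonneg (by positivity), mul_one]
    refine ⟨(s+u)^2, (s-u)^2, ?_, ?_, ?_, ?_⟩
    · linear_combination (s^2-u^2+1) * hs
    · linear_combination 2 * hs
    · have := parallelogram_law_with_norm ℝ s u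
      rw [norm_pow, norm_pow]
      rw [hu1] at this
      nlinarith
    · rw [show (s+u)^2-(s-u)^2 = 4*s*u by ring, norm_mul, norm_mul, hu1]
      norm_num
      nlinarith
  obtain ⟨p, p', h1, h2, h3, h4⟩ := key
  have hn : ‖p‖ * ‖p'‖ = 1 := by rw [← norm_mul, h1, norm_one]
  have e1 : ‖p'‖ = ‖p‖⁻¹ := eq_inv_of_mul_eq_one_right hn
  have e2 : ‖p‖ = ‖p'‖⁻¹ := eq_inv_of_mul_eq_one_left hn
  rcases le_total 1 ‖p‖ with h | h
  · exact ⟨p, p', h1, h2, h, e1, by rw [← e1]; exact h3, h4⟩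
  · refine ⟨p', p, by rw [mul_comm, h1], by rw [add_comm, h2], ?_, e2, by rw [← e2, add_comm, h3], by rw [norm_sub_rev, h4]⟩
    nlinarith [norm_nonneg p, norm_nonneg p']

noncomputable def hh (m : ℕ) (φ : ℝ) : ℝ := ‖Fs m m (4 * Complex.exp (φ * Complex.I) ^ 2)‖ ^ 2

lemma hh_cont (m : ℕ) : Continuous (hh m) := by
  unfold hh Fs; fun_prop

lemma int_cos (n : ℤ) (hn : n ≠ 0) : ∫ φ in (-(Real.pi/2))..(Real.pi/2), Real.cos (2 * n * φ) = 0 := by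
  have h2 : (2 * n : ℝ) ≠ 0 := by positivity
  rw [intervalIntegral.integral_comp_mul_left (fun x => Real.cos x) h2, integral_cos]
  have e : (2 * n * (Real.pi/2) : ℝ) = n * Real.pi := by ring
  rw [mul_neg, Real.sin_neg, e, Real.sin_int_mul_pi]; simp

lemma hh_expand (m : ℕ) (φ : ℝ) : hh m φ = ∑ i ∈ Finset.range m, ∑ j ∈ Finset.range m,
    (((m+i).choose (2*i+1) : ℝ) * 4^(i+1)) * (((m+j).choose (2*j+1) : ℝ) * 4^(j+1)) *
      Real.cos (2 * ((i - j : ℤ) : ℝ) * φ) := by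
  have e : Fs m m (4 * Complex.exp (φ * Complex.I) ^ 2) = 
     ((∑ i ∈ Finset.range m, ((m+i).choose (2*i+1) : ℝ) * 4^(i+1) * Real.cos (2*(i+1)*φ) : ℝ) : ℂ) + 
     ((∑ i ∈ Finset.range m, ((m+i).choose (2*i+1) : ℝ) * 4^(i+1) * Real.sin (2*(i+1)*φ) : ℝ) : ℂ) * Complex.I := by
    unfold Fs
    push_cast
    rw [Finset.sum_mul, ← Finset.sum_add_distrib]
    apply Finset.sum_congr rfl
    intro j _
    rw [mul_pow, ← pow_mul, ← Complex.exp_nat_mul]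
    have : ((2 * (j+1) : ℕ) : ℂ) * (φ * Complex.I) = (2 * (j+1) * φ) * Complex.I := by push_cast; ring
    rw [this, Complex.exp_mul_I]; ring
  unfold hh
  rw [e, ← Complex.normSq_eq_norm_sq, Complex.normSq_add_mul_I, sq, sq, Finset.sum_mul_sum, Finset.sum_mul_sum,
    ← Finset.sum_add_distrib]
  refine Finset.sum_congr rfl fun i _ => ?_
  rw [← Finset.sum_add_distrib]
  refine Finset.sum_congr rfl fun j _ => ?_
  have : (2 * ((i - j : ℤ) : ℝ) * φ) = 2*(i+1)*φ - 2*(j+1)*φ := by push_cast; ring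
  rw [this, Real.cos_sub]; ring

lemma parseval (m : ℕ) : ∫ φ in (-(Real.pi/2))..(Real.pi/2), hh m φ = Real.pi *
    ∑ k ∈ Finset.Icc 1 m, (16 : ℝ) ^ k * (((m + k - 1).choose (m - k) : ℝ)) ^ 2 := by
  simp_rw [hh_expand]
  rw [intervalIntegral.integral_finsetSum (fun i _ => Continuous.intervalIntegrable (by fun_prop) _ _)]
  have hs : ∑ k ∈ Finset.Icc 1 m, (16 : ℝ) ^ k * (((m + k - 1).choose (m - k) : ℝ)) ^ 2
      = ∑ i ∈ Finset.range m, (((m+i).choose (2*i+1) : ℝ) * 4^(i+1))^2 := by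
    have h0 := Finset.sum_Ico_add' (fun k => (16 : ℝ) ^ k * (((m + k - 1).choose (m - k) : ℝ)) ^ 2) 0 m 1
    have h1 : Finset.Icc 1 m = Finset.Ico (0+1) (m+1) := by ext; simp
    rw [h1, ← h0, Finset.range_eq_Ico]
    · refine Finset.sum_congr rfl fun i hi => ?_
      have hi := Finset.mem_Ico.1 hi
      rw [show m + (i+1) - 1 = m + i by omega, ← Nat.choose_symm (n := m+i) (k := 2*i+1) (by omega),
        show m + i - (2*i+1) = m - (i+1) by omega, mul_pow, ← pow_mul, mul_comm (i+1) 2, pow_mul]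
      norm_num
      ring
  rw [hs, Finset.mul_sum]
  refine Finset.sum_congr rfl fun i hi => ?_
  rw [intervalIntegral.integral_finsetSum (fun i _ => Continuous.intervalIntegrable (by fun_prop) _ _)]
  rw [Finset.sum_eq_single i]
  · simp; ring
  · intro j _ hj
    rw [intervalIntegral.integral_const_mul, int_cos, mul_zero]
    omega
  · exact fun h => absurd hi h

/-- The norm of the root. -/
lemma hh_bounds (m : ℕ) (φ : ℝ) (hφ : 0 ≤ Real.cos φ) : ∃ R : ℝ, 1 ≤ R ∧ R + R⁻¹ = 2 + 4 * Real.cos φ ∧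
    hh m φ ≤ 16 * (m * R ^ m) ^ 2 ∧ 2 * Real.cos φ * hh m φ ≤ (R ^ m + (R⁻¹) ^ m)^2 ∧
    (R ^ m - (R⁻¹) ^ m)^2 ≤ 2 * Real.cos φ * hh m φ := by
  obtain ⟨p, p', h1, h2, h3, h4, h5, h6⟩ := exists_p φ hφ
  have hF := Fs_eq p p' _ h1 h2 m
  have hh1 : hh m φ = 16 * ‖Vv p p' m‖^2 := by
    unfold hh
    rw [hF, norm_mul, norm_mul, norm_pow, Complex.norm_exp_ofReal_mul_I]; norm_num; ring
  have hV := congrArg norm (Vv_mul p p' m)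
  rw [norm_mul] at hV
  have h7 : 2 * Real.cos φ * hh m φ = ‖p^m - p'^m‖^2 := by
    rw [hh1, ← hV, mul_pow, h6]; ring
  refine ⟨‖p‖, h3, h5, ?_, ?_, ?_⟩
  · rw [hh1]
    have := Vv_le p p' h3 (by rw [h4]; exact inv_le_one_of_one_le₀ h3) m
    gcongr
  · rw [h7, ← h4, ← norm_pow p m, ← norm_pow p' m]
    gcongr
    exact norm_sub_le _ _
  · rw [h7, ← h4, ← norm_pow p m, ← norm_pow p' m]
    rw [sq_le_sq, abs_norm]
    exact abs_norm_sub_norm_le _ _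

lemma root_eq {R r c : ℝ} (hR : 1 ≤ R) (hr : 1 ≤ r) (h : R + R⁻¹ = 2 + 4 * c) (h' : r + r⁻¹ = 6) :
    (r - R) * (1 - R⁻¹ * r⁻¹) = 4 * (1 - c) := by
  have : R ≠ 0 := by positivity
  have : r ≠ 0 := by positivity
  have e : (r - R) * (1 - R⁻¹ * r⁻¹) = (r + r⁻¹) - (R + R⁻¹) := by field_simp; ring
  rw [e, h, h']; ring

lemma root_le {R r c : ℝ} (hR : 1 ≤ R) (hr : 5 ≤ r) (h : R + R⁻¹ = 2 + 4 * c) (h' : r + r⁻¹ = 6) (hc : c ≤ 1) :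
    4 * (1 - c) ≤ r - R ∧ r - R ≤ 5 * (1 - c) := by
  have h1 := root_eq hR (by linarith) h h'
  have a1 : R⁻¹ ≤ 1 := inv_le_one_of_one_le₀ hR
  have a2 : r⁻¹ ≤ 5⁻¹ := inv_anti₀ (by norm_num) hr
  have a3 : 0 < R⁻¹ * r⁻¹ := by positivity
  have a4 : R⁻¹ * r⁻¹ ≤ 1 * 5⁻¹ := mul_le_mul a1 a2 (by positivity) (by norm_num)
  have a5 : 0 ≤ r - R := by
    by_contra hneg
    push Not at hneg
    nlinarith
  constructor <;> nlinarith

lemma ratio_le {R r c : ℝ} (hR : 1 ≤ R) (hr : 5 ≤ r) (h : R + R⁻¹ = 2 + 4 * c) (h' : r + r⁻¹ = 6) (hc : c ≤ 1) :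
    R / r ≤ Real.exp (-(4 / r * (1 - c))) := by
  have h1 := (root_le hR hr h h' hc).1
  have hr0 : 0 < r := by linarith
  have := Real.add_one_le_exp (-(4 / r * (1 - c)))
  refine le_trans ?_ this
  rw [div_le_iff₀ hr0]
  have : (-(4 / r * (1 - c)) + 1) * r = r - 4 * (1 - c) := by field_simp; ring
  rw [this]; linarith

noncomputable def ff (r : ℝ) (m : ℕ) (t : ℝ) : ℝ :=
  (Set.Ioc (-(Real.pi/2) * √m) (Real.pi/2 * √m)).indicator (fun t => hh m (t / √m) / r ^ (2 * m)) t

lemma ff_nonneg (r : ℝ) (m : ℕ) (t : ℝ) : 0 ≤ ff r m t := by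
  unfold ff
  apply Set.indicator_nonneg
  intro t _
  have : 0 ≤ hh m (t / √m) := by unfold hh; positivity
  rw [pow_mul]; positivity

lemma ff_int (r : ℝ) (m : ℕ) : ∫ t, ff r m t = √m * (Real.pi *
    ∑ k ∈ Finset.Icc 1 m, (16 : ℝ) ^ k * (((m + k - 1).choose (m - k) : ℝ)) ^ 2) / r ^ (2*m) := by
  rw [← parseval]
  unfold ff
  rcases Nat.eq_zero_or_pos m with rfl | hm
  · simp
  have hs : 0 < √(m:ℝ) := by positivity
  have hpi := Real.pi_pos
  rw [MeasureTheory.integral_indicator measurableSet_Ioc,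
    ← intervalIntegral.integral_of_le (by nlinarith),
    intervalIntegral.integral_div, intervalIntegral.integral_comp_div _ hs.ne']
  rw [mul_div_cancel_right₀ _ hs.ne', mul_div_cancel_right₀ _ hs.ne', smul_eq_mul]

lemma ff_bound (r : ℝ) (hr : 5 ≤ r) (h' : r + r⁻¹ = 6) (m : ℕ) (t : ℝ) :
    ff r m t ≤ (4 + 16 * t ^ 4) * Real.exp (-(16 / (r * Real.pi ^ 2)) * t ^ 2) := by
  have hr0 : 0 < r := by linarith
  unfold ff
  by_cases ht : t ∈ Set.Ioc (-(Real.pi/2) * √m) (Real.pi/2 * √m)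
  swap
  · rw [Set.indicator_of_notMem ht]; positivity
  rw [Set.indicator_of_mem ht]
  rcases Nat.eq_zero_or_pos m with rfl | hm
  · simp at ht
  have hs : 0 < √(m:ℝ) := by positivity
  have hpi := Real.pi_pos
  set φ := t / √m with hφ
  have htφ : t = φ * √m := by rw [hφ]; field_simp
  have hφ1 : -(Real.pi/2) ≤ φ := by rw [hφ, le_div_iff₀ hs]; exact ht.1.le
  have hφ2 : φ ≤ Real.pi/2 := by rw [hφ, div_le_iff₀ hs]; exact ht.2
  have hc := Real.cos_nonneg_of_neg_pi_div_two_le_of_le hφ1 hφ2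
  have hq := Real.cos_le_one_sub_mul_cos_sq (x := φ) (abs_le.2 ⟨by linarith, by linarith⟩)
  have hlow := Real.one_sub_sq_div_two_le_cos (x := φ)
  have ht2 : t ^ 2 = m * φ ^ 2 := by rw [htφ, mul_pow, Real.sq_sqrt (by positivity)]; ring
  obtain ⟨R, hR1, hR2, hb1, hb2, -⟩ := hh_bounds m φ hc
  have hrat := ratio_le hR1 hr hR2 h' (Real.cos_le_one φ)
  have hmain : hh m φ ≤ (4 + 16 * t ^ 4) * R ^ (2 * m) := by
    have hRm : 1 ≤ R ^ m := one_le_pow₀ hR1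
    have hRi : (R⁻¹) ^ m ≤ 1 := pow_le_one₀ (by positivity) (inv_le_one_of_one_le₀ hR1)
    have hRi0 : 0 ≤ (R⁻¹) ^ m := by positivity
    have e : R ^ (2 * m) = (R ^ m) ^ 2 := by rw [mul_comm, pow_mul]
    rw [e]
    have hh0 : 0 ≤ hh m φ := by unfold hh; positivity
    rcases le_total (1/2) (Real.cos φ) with hcc | hcc
    · calc hh m φ ≤ 2 * Real.cos φ * hh m φ := by nlinarith
        _ ≤ (R ^ m + (R⁻¹) ^ m)^2 := hb2
        _ ≤ (2 * R ^ m) ^ 2 := by gcongr; linarith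
        _ = (4 + 0) * (R ^ m) ^ 2 := by ring
        _ ≤ _ := by gcongr; positivity
    · have h1 : 1 ≤ φ ^ 2 := by linarith
      have h2 : (m:ℝ) ≤ t ^ 2 := by rw [ht2]; exact le_mul_of_one_le_right (by positivity) h1
      calc hh m φ ≤ _ := hb1
        _ = (0 + 16 * (m:ℝ) ^ 2) * (R ^ m) ^ 2 := by ring
        _ ≤ (4 + 16 * (t ^ 2) ^ 2) * (R ^ m) ^ 2 := by gcongr; norm_num
        _ = _ := by ring
  calc hh m φ / r ^ (2 * m) ≤ ((4 + 16 * t ^ 4) * R ^ (2 * m)) / r ^ (2 * m) := by gcongr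
    _ = (4 + 16 * t ^ 4) * (R / r) ^ (2 * m) := by rw [div_pow]; ring
    _ ≤ (4 + 16 * t ^ 4) * (Real.exp (-(4 / r * (1 - Real.cos φ)))) ^ (2 * m) := by gcongr
    _ ≤ _ := by
      rw [← Real.exp_nat_mul]
      refine mul_le_mul_of_nonneg_left (Real.exp_le_exp.2 ?_) (by positivity)
      rw [ht2]
      push_cast
      have : -(16 / (r * Real.pi ^ 2)) * (m * φ ^ 2) = 2 * m * -(4 / r * (2 / Real.pi ^ 2 * φ ^ 2)) := by
        field_simp; ring
      rw [this]
      refine mul_le_mul_of_nonneg_left (neg_le_neg ?_) (by positivity)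
      refine mul_le_mul_of_nonneg_left ?_ (by positivity)
      linarith

lemma bound_int (b : ℝ) (hb : 0 < b) :
    MeasureTheory.Integrable (fun t : ℝ => (4 + 16 * t ^ 4) * Real.exp (-b * t ^ 2)) := by
  have h1 := integrable_exp_neg_mul_sq hb
  have h2 := integrable_rpow_mul_exp_neg_mul_sq hb (s := (4:ℕ)) (by norm_num)
  simp_rw [Real.rpow_natCast] at h2
  have := (h1.const_mul 4).add (h2.const_mul 16)
  refine this.congr (Eventually.of_forall fun t => ?_)
  simp only [Pi.add_apply]; ring

lemma ff_lim (r : ℝ) (hr : 5 ≤ r) (h' : r + r⁻¹ = 6) (t : ℝ) :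
    Tendsto (fun m => ff r m t) atTop (nhds (Real.exp (-(2 * t^2 / (r - r⁻¹)))^2 / 2)) := by
  have hr0 : 0 < r := by linarith
  have hsq : Tendsto (fun m : ℕ => √(m:ℝ)) atTop atTop :=
    Real.tendsto_sqrt_atTop.comp tendsto_natCast_atTop_atTop
  have hφ : Tendsto (fun m : ℕ => t / √(m:ℝ)) atTop (nhds 0) := tendsto_const_nhds.div_atTop hsq
  have hcos : Tendsto (fun m : ℕ => Real.cos (t / √(m:ℝ))) atTop (nhds 1) := by
    have := (Real.continuous_cos.tendsto 0).comp hφ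
    simpa [Function.comp_def] using this
  -- second order behaviour of the cosine
  have hcos2 : Tendsto (fun m : ℕ => m * (1 - Real.cos (t / √(m:ℝ)))) atTop (nhds (t ^ 2 / 2)) := by
    have hs0 : Tendsto (fun m : ℕ => Real.sinc (t / √(m:ℝ) / 2)) atTop (nhds 1) := by
      have := (Real.continuous_sinc.tendsto 0).comp (by simpa using hφ.div_const 2)
      simpa [Function.comp_def] using this
    have := (hs0.pow 2).const_mul (t ^ 2 / 2)
    rw [one_pow, mul_one] at this
    refine this.congr' ?_
    filter_upwards [eventually_gt_atTop 0] with m hm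
    have hs : 0 < √(m:ℝ) := by positivity
    rcases eq_or_ne t 0 with rfl | ht
    · simp
    have h0 : t / √(m:ℝ) / 2 ≠ 0 := by positivity
    rw [Real.sinc_of_ne_zero h0]
    have h1 : Real.cos (t / √(m:ℝ)) = 1 - 2 * Real.sin (t / √(m:ℝ) / 2) ^ 2 := by
      have := Real.cos_two_mul (t / √(m:ℝ) / 2)
      rw [mul_div_cancel₀ _ (two_ne_zero)] at this
      rw [this, Real.cos_sq']; ring
    rw [h1]
    have h2 : √(m:ℝ) ^ 2 = m := Real.sq_sqrt (by positivity)
    field_simp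
    rw [h2]; ring
  have hex : ∀ m : ℕ, ∃ R : ℝ, 0 ≤ Real.cos (t / √(m:ℝ)) → 
    (1 ≤ R ∧ R + R⁻¹ = 2 + 4 * Real.cos (t / √(m:ℝ)) ∧
    2 * Real.cos (t / √(m:ℝ)) * hh m (t / √(m:ℝ)) ≤ (R ^ m + (R⁻¹) ^ m)^2 ∧
    (R ^ m - (R⁻¹) ^ m)^2 ≤ 2 * Real.cos (t / √(m:ℝ)) * hh m (t / √(m:ℝ))) := by
    intro m
    by_cases h : 0 ≤ Real.cos (t / √(m:ℝ))
    · obtain ⟨R, h1, h2, -, h3, h4⟩ := hh_bounds m _ h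
      exact ⟨R, fun _ => ⟨h1, h2, h3, h4⟩⟩
    · exact ⟨0, fun h2 => absurd h2 h⟩
  choose R hR using hex
  have hev : ∀ᶠ m : ℕ in atTop, 0 < Real.cos (t / √(m:ℝ)) := hcos.eventually (lt_mem_nhds one_pos)
  have hRlim : Tendsto R atTop (nhds r) := by
    have : Tendsto (fun m => r - R m) atTop (nhds 0) := by
      have u := (tendsto_const_nhds (x := (1:ℝ))).sub hcos
      rw [sub_self] at u
      refine tendsto_of_tendsto_of_tendsto_of_le_of_le' (by simpa using u.const_mul 4) (by simpa using u.const_mul 5) ?_ ?_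
      · filter_upwards [hev] with m hm
        obtain ⟨h1, h2, -, -⟩ := hR m hm.le
        exact (root_le h1 hr h2 h' (Real.cos_le_one _)).1
      · filter_upwards [hev] with m hm
        obtain ⟨h1, h2, -, -⟩ := hR m hm.le
        exact (root_le h1 hr h2 h' (Real.cos_le_one _)).2
    simpa using (tendsto_const_nhds (x := r)).sub this
  have hri : r⁻¹ ≤ 5⁻¹ := inv_anti₀ (by norm_num) hr
  have hpos : 0 < 1 - r⁻¹ * r⁻¹ := by
    have : 0 < r⁻¹ := by positivity
    nlinarith
  have hg : Tendsto (fun m : ℕ => m * (R m / r - 1)) atTop (nhds (-(2 * t^2 / (r - r⁻¹)))) := by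
    have h1 : Tendsto (fun m => 1 - (R m)⁻¹ * r⁻¹) atTop (nhds (1 - r⁻¹ * r⁻¹)) :=
      tendsto_const_nhds.sub ((hRlim.inv₀ hr0.ne').mul_const _)
    have h2 := ((hcos2.const_mul 4).div h1 hpos.ne').div_const (-r)
    have e : 4 * (t ^ 2 / 2) / (1 - r⁻¹ * r⁻¹) / -r = -(2 * t^2 / (r - r⁻¹)) := by
      have : r - r⁻¹ = r * (1 - r⁻¹ * r⁻¹) := by field_simp
      rw [this]
      field_simp
      ring
    rw [e] at h2
    refine h2.congr' ?_
    filter_upwards [hev, h1.eventually (lt_mem_nhds hpos)] with m hm hm2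
    obtain ⟨a1, a2, -, -⟩ := hR m hm.le
    have a3 := root_eq a1 (by linarith) a2 h'
    simp only [Pi.div_apply]
    rw [mul_left_comm, ← a3, ← mul_assoc, mul_div_cancel_right₀ _ hm2.ne']
    field_simp
    ring
  have hA : Tendsto (fun m => (R m / r) ^ m) atTop (nhds (Real.exp (-(2 * t^2 / (r - r⁻¹))))) := by
    have := Real.tendsto_one_add_pow_exp_of_tendsto hg
    simpa using this
  have hB : Tendsto (fun m => ((R m)⁻¹ / r) ^ m) atTop (nhds 0) := by
    refine tendsto_of_tendsto_of_tendsto_of_le_of_le' tendsto_const_nhds 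
      (tendsto_pow_atTop_nhds_zero_of_lt_one (r := r⁻¹) (by positivity) (by linarith)) ?_ ?_
    · filter_upwards [hev] with m hm
      obtain ⟨a1, a2, -, -⟩ := hR m hm.le
      positivity
    · filter_upwards [hev] with m hm
      obtain ⟨a1, a2, -, -⟩ := hR m hm.le
      have : (R m)⁻¹ ≤ 1 := inv_le_one_of_one_le₀ a1
      have h0 : 0 < (R m)⁻¹ := by positivity
      gcongr
      rw [div_le_iff₀ hr0, inv_mul_cancel₀ hr0.ne']; exact this
  have hc2 : Tendsto (fun m : ℕ => 2 * Real.cos (t / √(m:ℝ))) atTop (nhds 2) := by simpa using hcos.const_mul 2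
  have hup := ((hA.add hB).pow 2).div hc2 two_ne_zero
  have hlo := ((hA.sub hB).pow 2).div hc2 two_ne_zero
  rw [add_zero] at hup
  rw [sub_zero] at hlo
  have hmem : ∀ᶠ m : ℕ in atTop, ff r m t = hh m (t / √m) / r ^ (2 * m) := by
    filter_upwards [hsq.eventually_gt_atTop |t|] with m hm
    unfold ff
    rw [Set.indicator_of_mem]
    have := Real.pi_gt_three
    have h3 := abs_lt.1 hm
    have h4 : 0 ≤ √(m:ℝ) := Real.sqrt_nonneg _
    constructor <;> nlinarith
  refine tendsto_of_tendsto_of_tendsto_of_le_of_le' hlo hup ?_ ?_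
  · filter_upwards [hev, hmem] with m hm hm2
    obtain ⟨a1, a2, a3, a4⟩ := hR m hm.le
    rw [hm2]
    simp only [Pi.div_apply]
    rw [div_pow, div_pow, ← sub_div, div_pow, div_div, ← pow_mul, mul_comm m 2, div_le_div_iff₀ (by positivity) (by positivity)]
    have := mul_le_mul_of_nonneg_right a4 (show 0 ≤ r ^ (2*m) by positivity)
    linarith
  · filter_upwards [hev, hmem] with m hm hm2
    obtain ⟨a1, a2, a3, a4⟩ := hR m hm.le
    rw [hm2]
    simp only [Pi.div_apply]
    rw [div_pow, div_pow, ← add_div, div_pow, div_div, ← pow_mul, mul_comm m 2, div_le_div_iff₀ (by positivity) (by positivity)]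
    have := mul_le_mul_of_nonneg_right a3 (show 0 ≤ r ^ (2*m) by positivity)
    linarith

/-- As `m → ∞`, `Σ_{k=1}^m 16^k C(m+k-1, m-k)² ~ (√2+1)^{4m} / (2^{1/4} √(2πm))`. -/
theorem variance_sum_asymptotics :
    Tendsto (fun m : ℕ =>
      (∑ k ∈ Finset.Icc 1 m, (16 : ℝ) ^ k * (((m + k - 1).choose (m - k) : ℝ)) ^ 2)
        * (2 : ℝ) ^ ((1 : ℝ) / 4) * Real.sqrt (2 * Real.pi * m)
        * ((Real.sqrt 2 + 1) ^ (4 * m))⁻¹)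
      atTop (nhds 1) := by
  have hs2 : √(2:ℝ) ^ 2 = 2 := Real.sq_sqrt (by norm_num)
  have hs0 : 0 < √(2:ℝ) := by positivity
  have hpi := Real.pi_pos
  obtain ⟨r, hrdef⟩ : ∃ r : ℝ, r = (√2 + 1) ^ 2 := ⟨_, rfl⟩
  have hr1 : r = 3 + 2 * √2 := by rw [hrdef]; linarith
  have hri : r⁻¹ = 3 - 2 * √2 := by
    rw [hr1]; apply inv_eq_of_mul_eq_one_right; nlinarith
  have hr : 5 ≤ r := by nlinarith
  have h' : r + r⁻¹ = 6 := by rw [hri, hr1]; ring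
  have hb : 0 < 16 / (r * Real.pi ^ 2) := by positivity
  have key := MeasureTheory.tendsto_integral_of_dominated_convergence (μ := MeasureTheory.volume) (F := ff r) _ 
    (fun m => by
      unfold ff
      refine (Continuous.aestronglyMeasurable ?_).indicator measurableSet_Ioc
      have := hh_cont m
      fun_prop)
    (bound_int _ hb)
    (fun m => Eventually.of_forall fun t => by
      rw [Real.norm_of_nonneg (ff_nonneg r m t)]; exact ff_bound r hr h' m t)
    (Eventually.of_forall fun t => ff_lim r hr h' t)
  have hint : ∫ t : ℝ, Real.exp (-(2 * t^2 / (r - r⁻¹)))^2 / 2 = √(Real.pi * √2) / 2 := by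
    have : ∀ t : ℝ, Real.exp (-(2 * t^2 / (r - r⁻¹)))^2 / 2 = Real.exp (-(1/√2) * t^2) / 2 := by
      intro t
      rw [← Real.exp_nat_mul, hri, hr1]
      congr 2
      push_cast
      field_simp
      ring
    simp_rw [this]
    rw [MeasureTheory.integral_div, integral_gaussian]
    simp
  rw [hint] at key
  have key2 := key.mul_const ((2:ℝ) ^ ((1 : ℝ) / 4) * √(2 * Real.pi) / Real.pi)
  have q4 : ((2:ℝ) ^ ((1 : ℝ) / 4)) = √(√2) := by
    rw [Real.sqrt_eq_rpow, Real.sqrt_eq_rpow, ← Real.rpow_mul (by norm_num)]; norm_num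
  have hval : √(Real.pi * √2) / 2 * ((2:ℝ) ^ ((1 : ℝ) / 4) * √(2 * Real.pi) / Real.pi) = 1 := by
    rw [q4, Real.sqrt_mul hpi.le, Real.sqrt_mul (by norm_num)]
    have e1 : √(√(2:ℝ)) ^ 2 = √2 := Real.sq_sqrt hs0.le
    have e2 : √Real.pi ^ 2 = Real.pi := Real.sq_sqrt hpi.le
    have : √Real.pi * √√2 / 2 * (√√2 * (√2 * √Real.pi) / Real.pi) = (√Real.pi ^ 2 * √√2 ^ 2 * √2) / (2 * Real.pi) := by
      field_simp
    rw [this, e1, e2, mul_assoc, ← sq, hs2]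
    field_simp
  rw [hval] at key2
  refine key2.congr fun m => ?_
  rw [ff_int, hrdef, ← pow_mul, show 2 * (2 * m) = 4 * m by ring, Real.sqrt_mul (show 0 ≤ 2 * Real.pi by positivity) (m : ℝ)]
  field_simp
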